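/- Let α = (X_g, α_g)_{g∈G} be a partial action of a groupoid G on a set X, and suppose the global action β = (Y_g, β_g)_{g∈G} of G on Y is a globalization of α (with X ⊆ Y and i the inclusion). Then α is free if and only if β is free. -/

import Mathlib

universe u v w

/-- A groupoid as an algebraic structure: a set `G` with a (totalized) partially
defined multiplication, inversion, source `d` and range `r`.  The product `mul g h`
is only meaningful when `d g = r h`. -/
structure SetGroupoid (G : Type u) where
  mul : G → G → G
  inv : G → G
  d : G → G
  r : G → G
  inv_inv : ∀ g, inv (inv g) = g
  d_inv : ∀ g, d (inv g) = r g
  r_inv : ∀ g, r (inv g) = d g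
  mul_d_self : ∀ g, mul g (d g) = g
  r_mul_self : ∀ g, mul (r g) g = g
  inv_mul : ∀ g, mul (inv g) g = d g
  mul_inv : ∀ g, mul g (inv g) = r g
  d_mul : ∀ g h, d g = r h → d (mul g h) = d h
  r_mul : ∀ g h, d g = r h → r (mul g h) = r g
  mul_assoc : ∀ g h k, d g = r h → d h = r k → mul (mul g h) k = mul g (mul h k)
  d_idem : ∀ g, d (d g) = d g
  r_d : ∀ g, r (d g) = d g

/-- A (set theoretical) partial action of a groupoid `G` on a set `X`:
subsets `D g = X_g` and (totalized) bijections `act g : X_{g⁻¹} → X_g`, together with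
the anchor map sending `x` to the unique identity `e` with `x ∈ X_e`. -/
structure PartialAction {G : Type u} (𝒢 : SetGroupoid G) (X : Type v) where
  D : G → Set X
  act : G → X → X
  anchor : X → G
  anchor_isUnit : ∀ x, 𝒢.d (anchor x) = anchor x
  mem_anchor : ∀ x, x ∈ D (anchor x)
  anchor_unique : ∀ x e, 𝒢.d e = e → x ∈ D e → e = anchor x
  D_subset : ∀ g, D g ⊆ D (𝒢.r g)
  act_unit : ∀ e, 𝒢.d e = e → ∀ x ∈ D e, act e x = x
  act_mem : ∀ g, ∀ x ∈ D (𝒢.inv g), act g x ∈ D g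
  act_act : ∀ g, ∀ x ∈ D (𝒢.inv g), act (𝒢.inv g) (act g x) = x
  act_comp_mem : ∀ g h, 𝒢.d g = 𝒢.r h → ∀ x, x ∈ D (𝒢.inv g) → x ∈ D h →
      act g x ∈ D (𝒢.mul g h)
  act_comp : ∀ g h, 𝒢.d g = 𝒢.r h → ∀ x, x ∈ D (𝒢.inv h) → act h x ∈ D (𝒢.inv g) →
      act g (act h x) = act (𝒢.mul g h) x

namespace PartialAction

variable {G : Type u} {X : Type v} {𝒢 : SetGroupoid G}

/-- A partial action is global if `α_{gh} = α_g ∘ α_h` (as partial maps, including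
equality of domains) for every composable pair `(g,h) ∈ G²`. -/
def IsGlobal (α : PartialAction 𝒢 X) : Prop :=
  ∀ g h, 𝒢.d g = 𝒢.r h →
    ((∀ x, x ∈ α.D (𝒢.inv (𝒢.mul g h)) ↔ x ∈ α.D (𝒢.inv h) ∧ α.act h x ∈ α.D (𝒢.inv g)) ∧
      ∀ x ∈ α.D (𝒢.inv (𝒢.mul g h)), α.act (𝒢.mul g h) x = α.act g (α.act h x))

/-- Transitivity: some point has orbit equal to all of `X`. -/
def Transitive (α : PartialAction 𝒢 X) : Prop :=
  ∃ x : X, ∀ y : X, ∃ g, x ∈ α.D (𝒢.inv g) ∧ y = α.act g x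

/-- Freeness: every stabilizer reduces to the anchor identity. -/
def Free (α : PartialAction 𝒢 X) : Prop :=
  ∀ (x : X) (g : G), x ∈ α.D (𝒢.inv g) → α.act g x = x → g = α.anchor x

end PartialAction

/-- `β` (a global action of `G` on `Y`) is a globalization of the partial action `α`
of `G` on `X`, via the injection `i : X → Y`. -/
structure IsGlobalization {G : Type u} {X : Type v} {Y : Type w} {𝒢 : SetGroupoid G}
    (α : PartialAction 𝒢 X) (β : PartialAction 𝒢 Y) (i : X → Y) : Prop where
  global : β.IsGlobal
  inj : Function.Injective i
  cond_i : ∀ g, i '' α.D g = Set.range i ∩ β.act g '' (Set.range i ∩ β.D (𝒢.inv g))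
  cond_ii : ∀ g, ∀ x ∈ α.D (𝒢.inv g), β.act g (i x) = i (α.act g x)
  cond_iii : ∀ g, β.D g = ⋃ h ∈ {h : G | 𝒢.r h = 𝒢.r g}, β.act h '' (i '' α.D (𝒢.d h))

theorem SetGroupoid.r_r' {G : Type u} (𝒢 : SetGroupoid G) (g : G) : 𝒢.r (𝒢.r g) = 𝒢.r g := by
  rw [← 𝒢.d_inv g, 𝒢.r_d]

theorem SetGroupoid.d_r' {G : Type u} (𝒢 : SetGroupoid G) (g : G) : 𝒢.d (𝒢.r g) = 𝒢.r g := by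
  rw [← 𝒢.d_inv g, 𝒢.d_idem]

theorem SetGroupoid.r_unit' {G : Type u} (𝒢 : SetGroupoid G) (e : G) (he : 𝒢.d e = e) :
    𝒢.r e = e := by
  have := 𝒢.r_d e
  rwa [he] at this

theorem SetGroupoid.inv_unit' {G : Type u} (𝒢 : SetGroupoid G) (e : G) (he : 𝒢.d e = e) :
    𝒢.inv e = e := by
  have h1 := 𝒢.mul_d_self (𝒢.inv e)
  rw [𝒢.d_inv, 𝒢.r_unit' e he, 𝒢.inv_mul, he] at h1
  exact h1.symm

theorem IsGlobalization.D_eq {G : Type u} {X : Type v} {Y : Type w} {𝒢 : SetGroupoid G}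
    {α : PartialAction 𝒢 X} {β : PartialAction 𝒢 Y} {i : X → Y}
    (h : IsGlobalization α β i) (g k : G) (hr : 𝒢.r g = 𝒢.r k) : β.D g = β.D k := by
  rw [h.cond_iii g, h.cond_iii k, hr]

theorem IsGlobalization.i_mem {G : Type u} {X : Type v} {Y : Type w} {𝒢 : SetGroupoid G}
    {α : PartialAction 𝒢 X} {β : PartialAction 𝒢 Y} {i : X → Y}
    (h : IsGlobalization α β i) (g : G) (x : X) (hx : x ∈ α.D g) : i x ∈ β.D g := by
  have h1 : i x ∈ i '' α.D g := ⟨x, hx, rfl⟩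
  rw [h.cond_i] at h1
  obtain ⟨_, y, ⟨_, hy⟩, e⟩ := h1
  rw [← e]
  exact β.act_mem g y hy

theorem IsGlobalization.anchor_eq {G : Type u} {X : Type v} {Y : Type w} {𝒢 : SetGroupoid G}
    {α : PartialAction 𝒢 X} {β : PartialAction 𝒢 Y} {i : X → Y}
    (h : IsGlobalization α β i) (x : X) : α.anchor x = β.anchor (i x) :=
  β.anchor_unique _ _ (α.anchor_isUnit x) (h.i_mem _ _ (α.mem_anchor x))

/-- If the global action `β` of `G` on `Y` is a globalization of the
partial action `α` of `G` on `X`, then `α` is free iff `β` is free. -/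
theorem free_iff_globalization_free {G : Type u} {X : Type v} {Y : Type w}
    {𝒢 : SetGroupoid G} (α : PartialAction 𝒢 X) (β : PartialAction 𝒢 Y) (i : X → Y)
    (h : IsGlobalization α β i) :
    α.Free ↔ β.Free := by
  constructor
  · intro hα y g hy hg
    have hdg : 𝒢.d g = β.anchor y := by
      apply β.anchor_unique _ _ (𝒢.d_idem g)
      have := β.D_subset _ hy
      rwa [𝒢.r_inv] at this
    have hrg : 𝒢.r g = β.anchor y := by
      apply β.anchor_unique _ _ (𝒢.d_r' g)
      have := β.act_mem g y hy
      rw [hg] at this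
      exact β.D_subset _ this
    have hy' := hy
    rw [h.cond_iii] at hy'
    simp only [Set.mem_iUnion, Set.mem_setOf_eq] at hy'
    obtain ⟨k, hk, _, ⟨x, hx, rfl⟩, hkx⟩ := hy'
    rw [𝒢.r_inv] at hk
    have hrk : 𝒢.r k = β.anchor y := hk.trans hdg
    have hix : i x ∈ β.D (𝒢.inv k) := by
      rw [h.D_eq (𝒢.inv k) (𝒢.d k) (by rw [𝒢.r_inv, 𝒢.r_d])]
      exact h.i_mem _ _ hx
    have hyk : y ∈ β.D k := by
      rw [← hkx]; exact β.act_mem k _ hix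
    have c1 : 𝒢.d g = 𝒢.r k := hk.symm
    have c2 : 𝒢.d (𝒢.inv k) = 𝒢.r (𝒢.mul g k) := by
      rw [𝒢.d_inv, 𝒢.r_mul g k c1, hrk, hrg]
    have m1 : i x ∈ β.D (𝒢.inv (𝒢.mul g k)) := by
      rw [((h.global g k c1).1 (i x))]
      exact ⟨hix, by rw [hkx]; exact hy⟩
    have a1 : β.act (𝒢.mul g k) (i x) = y := by
      rw [(h.global g k c1).2 _ m1, hkx, hg]
    have m2 : i x ∈ β.D (𝒢.inv (𝒢.mul (𝒢.inv k) (𝒢.mul g k))) := by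
      rw [((h.global _ _ c2).1 (i x))]
      exact ⟨m1, by rw [a1, 𝒢.inv_inv]; exact hyk⟩
    have a2 : β.act (𝒢.mul (𝒢.inv k) (𝒢.mul g k)) (i x) = i x := by
      rw [(h.global _ _ c2).2 _ m2, a1, ← hkx, β.act_act k _ hix]
    have hm : 𝒢.mul (𝒢.inv k) (𝒢.mul g k) = α.anchor x := by
      generalize 𝒢.mul (𝒢.inv k) (𝒢.mul g k) = m at m2 a2
      have m3 : i x ∈ i '' α.D (𝒢.inv m) := by
        rw [h.cond_i]
        refine ⟨⟨x, rfl⟩, i x, ⟨⟨x, rfl⟩, ?_⟩, ?_⟩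
        · rw [𝒢.inv_inv]
          have := β.act_mem m _ m2
          rwa [a2] at this
        · have := β.act_act m _ m2
          rwa [a2] at this
      obtain ⟨x', hx', e⟩ := m3
      rw [h.inj e] at hx'
      apply hα x m hx'
      apply h.inj
      rw [← h.cond_ii m x hx', a2]
    rw [← α.anchor_unique x _ (𝒢.d_idem k) hx] at hm
    have hgk : 𝒢.mul g k = k := by
      have e := congrArg (𝒢.mul k) hm
      rw [𝒢.mul_d_self, ← 𝒢.mul_assoc k (𝒢.inv k) _ (𝒢.r_inv k).symm c2, 𝒢.mul_inv] at e
      have e2 := 𝒢.r_mul_self (𝒢.mul g k)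
      rw [← c2, 𝒢.d_inv, e] at e2
      exact e2.symm
    have e := 𝒢.mul_assoc g k (𝒢.inv k) c1 (𝒢.r_inv k).symm
    rw [hgk, 𝒢.mul_inv, ← c1, 𝒢.mul_d_self] at e
    rw [← e, hdg]
  · intro hβ x g hx hg
    rw [h.anchor_eq]
    exact hβ (i x) g (h.i_mem _ _ hx) (by rw [h.cond_ii g x hx, hg])
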